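/- arXiv:1801.04803 — 2 statements merged into one kernel-verified Lean document; each statement's English description precedes it below -/
import Mathlib

section
/- Let q be a prime power and let v, d, k be integers with d even, 2 ≤ d/2 ≤ k ≤ v/2, and d ≤ k < 3d/2. Let C be a (v,#C,d;k)_q constant dimension code that contains a (v,d;k)_q lifted MRD code. Then #C ≤ q^{(v−k)(k−d/2+1)} + A_q(v−k, 3d−2k; d) + [v−k choose d/2]_q · [k choose d−1]_q · q^{(k−d+1)(v−k−d/2)} / [k−d/2 choose d/2−1]_q. -/
open Module

/-- The subspace of `F_q^v` of vectors whose first `k` coordinates vanish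
(denoted `Γ` in the paper); its complement (as a set of vectors) is `Δ`. -/
def Gamma (K : Type) [Field K] (k v : ℕ) : Submodule K (Fin v → K) where
  carrier := {x | ∀ j : Fin v, (j : ℕ) < k → x j = 0}
  add_mem' := by
    intro a b ha hb j hj
    simp [ha j hj, hb j hj]
  zero_mem' := by
    intro j hj
    rfl
  smul_mem' := by
    intro c x hx j hj
    simp [hx j hj]

/-- The subspace distance `d_S(U,W) = dim(U+W) - dim(U ∩ W)`. -/
noncomputable def sDist {K : Type} [Field K] {v : ℕ}
    (U W : Submodule K (Fin v → K)) : ℕ :=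
  finrank K ↥(U ⊔ W) - finrank K ↥(U ⊓ W)

/-- A constant dimension code of dimension `k` and minimum subspace distance `d`. -/
def IsCDC (K : Type) [Field K] (v : ℕ) (d k : ℤ)
    (C : Set (Submodule K (Fin v → K))) : Prop :=
  (∀ U ∈ C, (finrank K U : ℤ) = k) ∧
  ∀ U ∈ C, ∀ W ∈ C, U ≠ W → d ≤ (sDist U W : ℤ)

/-- `A_q(v,d;k)`: the maximum cardinality of a `(v,M,d;k)_q` CDC. -/
noncomputable def Amax (K : Type) [Field K] (v : ℕ) (d k : ℤ) : ℕ :=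
  sSup {n | ∃ C : Set (Submodule K (Fin v → K)), IsCDC K v d k C ∧ C.ncard = n}

/-- Row `i` of the `k × v` matrix `(I_k | A)`. -/
def liftRow {K : Type} [Field K] {k v : ℕ} (A : Matrix (Fin k) (Fin (v - k)) K)
    (i : Fin k) : Fin v → K := fun j =>
  if (j : ℕ) < k then (if (i : ℕ) = (j : ℕ) then 1 else 0)
  else if h2 : (j : ℕ) - k < v - k then A i ⟨(j : ℕ) - k, h2⟩ else 0

/-- `M` is a `(v,d;k)_q` lifted MRD code: `M = { rowspan (I_k | A) : A ∈ R }`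
for a `[k × (v-k), q^((v-k)(k-d/2+1)), d/2]_q` rank metric code `R`. -/
def IsLMRD (q : ℕ) (K : Type) [Field K] (v d k : ℕ)
    (M : Set (Submodule K (Fin v → K))) : Prop :=
  ∃ R : Set (Matrix (Fin k) (Fin (v - k)) K),
    R.ncard = q ^ ((v - k) * (k - d / 2 + 1)) ∧
    (∀ A ∈ R, ∀ B ∈ R, A ≠ B → d / 2 ≤ (A - B).rank) ∧
    M = {U | ∃ A ∈ R, U = Submodule.span K (Set.range (liftRow A))}

/-- The Gaussian binomial coefficient `[a choose b]_q`, defined to be `0`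
unless `0 ≤ b ≤ a`. -/
noncomputable def qBin (q : ℕ) (a b : ℤ) : ℚ :=
  if 0 ≤ b ∧ b ≤ a then
    ∏ i ∈ Finset.range b.toNat,
      ((q : ℚ) ^ a - (q : ℚ) ^ (i : ℤ)) / ((q : ℚ) ^ b - (q : ℚ) ^ (i : ℤ))
  else 0

/-- `[[w, u; c]]_q = q^(u*c) * [w-u choose c]_q` for `0 ≤ c ≤ w-u`, else `0`. -/
noncomputable def qBinD (q : ℕ) (w u c : ℤ) : ℚ :=
  if 0 ≤ c ∧ c ≤ w - u then (q : ℚ) ^ (u * c) * qBin q (w - u) c else 0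

/-!
An MRD code is so large that left multiplication by a matrix with `k - d/2 + 1` independent rows
maps it onto all matrices. Hence every `(k - d/2 + 1)`-subspace disjoint from `Γ` lies in a member
of the lifted MRD code, and by the distance condition every other codeword meets `Γ` in dimension
at least `d/2`.

Codewords meeting `Γ` in dimension at least `d` are shrunk to `d`-subspaces of `Γ`, which form a
code of distance `3d - 2k` there. For the remaining ones, count pairs of a `d/2`-tuple in `U ⊓ Γ`
and a `(k - d + 1)`-tuple in `U`, the first independent and the second independent modulo `Γ`. Such
a pair spans a subspace of dimension `k - d/2 + 1` and so determines the codeword `U`, and the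
number of pairs in `U` is smallest when `dim (U ⊓ Γ) = d/2`; the last summand of the bound is the
number of all pairs divided by this minimum.
-/

section LinearAlgebra

variable {K V V' : Type*} [Field K] [AddCommGroup V] [Module K V] [AddCommGroup V'] [Module K V']

lemma exists_submodule_le_finrank_eq {U : Submodule K V} {a : ℕ} (h : a ≤ finrank K U) :
    ∃ E ≤ U, finrank K E = a := by
  obtain ⟨t, ht⟩ := exists_linearIndependent_of_le_finrank h
  refine ⟨(Submodule.span K (Set.range t)).map U.subtype, Submodule.map_subtype_le _ _, ?_⟩
  rw [Submodule.finrank_map_subtype_eq, finrank_span_eq_card ht, Fintype.card_fin]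

lemma finrank_comap_of_injective {f : V →ₗ[K] V'} (hf : Function.Injective f)
    (U : Submodule K V') : finrank K (U.comap f) = finrank K ↥(U ⊓ LinearMap.range f) := by
  rw [inf_comm, ← Submodule.map_comap_eq]
  exact (Submodule.equivMapOfInjective f hf _).finrank_eq

lemma exists_submodule_le_disjoint_finrank_eq [FiniteDimensional K V] {U G : Submodule K V} {m : ℕ}
    (h : m + finrank K ↥(U ⊓ G) ≤ finrank K U) :
    ∃ X ≤ U, Disjoint X G ∧ finrank K X = m := by
  obtain ⟨Y, hdisj, hsup⟩ :=
    IsModularLattice.exists_disjoint_and_sup_eq (inf_le_left : U ⊓ G ≤ U)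
  have hYU : Y ≤ U := hsup ▸ le_sup_right
  have hrank := Submodule.finrank_sup_add_finrank_inf_eq (U ⊓ G) Y
  rw [hsup, hdisj.eq_bot, finrank_bot] at hrank
  obtain ⟨X, hXY, hX⟩ := exists_submodule_le_finrank_eq (by omega : m ≤ finrank K Y)
  refine ⟨X, hXY.trans hYU, ?_, hX⟩
  rw [disjoint_iff, ← inf_eq_left.2 (hXY.trans hYU), inf_assoc]
  exact (hdisj.symm.mono_left hXY).eq_bot

end LinearAlgebra

section Counting

lemma natCard_preimage_of_surjective {A B : Type*} [AddCommGroup A] [AddCommGroup B] (f : A →+ B)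
    (hf : Function.Surjective f) (S : Set B) :
    Nat.card (f ⁻¹' S) = Nat.card f.ker * Nat.card S := by
  let e := QuotientAddGroup.quotientKerEquivOfSurjective f hf
  rw [show f ⁻¹' S = QuotientAddGroup.mk ⁻¹' (e ⁻¹' S) from rfl,
    Nat.card_congr (QuotientAddGroup.preimageMkEquivAddSubgroupProdSet _ _), Nat.card_prod,
    Nat.card_preimage_of_injective e.injective fun y _ => e.surjective y]

lemma natCard_linearIndependent_comp_eq_mul {K V V' : Type*} [Field K] [AddCommGroup V]
    [Module K V] [AddCommGroup V'] [Module K V'] (f : V →ₗ[K] V') (m : ℕ) :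
    Nat.card {t : Fin m → V // LinearIndependent K (f ∘ t)} =
      Nat.card (LinearMap.ker f) ^ m *
        Nat.card {s : Fin m → LinearMap.range f // LinearIndependent K s} := by
  let φ := (f.rangeRestrict.compLeft (Fin m)).toAddMonoidHom
  have hφ : Function.Surjective φ := f.surjective_rangeRestrict.comp_left
  have hpre : {t : Fin m → V | LinearIndependent K (f ∘ t)} =
      φ ⁻¹' {s | LinearIndependent K s} := by
    ext t
    exact (LinearMap.range f).subtype.linearIndependent_iff (v := φ t)
      (LinearMap.range f).ker_subtype
  have e : φ.ker ≃ (Fin m → LinearMap.ker f) :=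
    (Equiv.subtypeEquivRight fun t => by
      simp [φ, AddMonoidHom.mem_ker, funext_iff, Subtype.ext_iff]).trans Equiv.subtypePiEquivPi
  calc Nat.card {t : Fin m → V | LinearIndependent K (f ∘ t)}
      = Nat.card φ.ker * Nat.card {s : Fin m → LinearMap.range f | LinearIndependent K s} := by
        rw [hpre, natCard_preimage_of_surjective φ hφ]
    _ = _ := by
        rw [Nat.card_congr e, Nat.card_fun, Nat.card_fin]
        rfl

lemma ncard_mul_le_ncard_of_pairwiseDisjoint {ι α : Type*} [Finite ι] [Finite α] {C : Set ι}
    {S : ι → Set α} {T : Set α} {N : ℚ} (hN : ∀ i ∈ C, N ≤ (S i).ncard)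
    (hST : ∀ i ∈ C, S i ⊆ T) (hS : C.PairwiseDisjoint S) : C.ncard * N ≤ T.ncard := by
  have hsum : ∑ i ∈ C.toFinite.toFinset, (S i).ncard ≤ T.ncard := by
    rw [← finsum_mem_eq_finite_toFinset_sum,
      ← C.toFinite.ncard_biUnion (fun _ _ => Set.toFinite _) hS]
    exact Set.ncard_le_ncard (Set.iUnion₂_subset hST)
  calc (C.ncard : ℚ) * N
      = C.toFinite.toFinset.card • N := by rw [Set.ncard_eq_toFinset_card C, nsmul_eq_mul]
    _ ≤ ∑ i ∈ C.toFinite.toFinset, ((S i).ncard : ℚ) :=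
        Finset.card_nsmul_le_sum _ _ _ fun i hi => hN i (C.toFinite.mem_toFinset.1 hi)
    _ ≤ T.ncard := by exact_mod_cast hsum

end Counting

section FrameCount

/-- The number of `m`-tuples of vectors of an `n`-dimensional space over the field with `q`
elements that are linearly independent modulo a given `g`-dimensional subspace. -/
def frameCount (q : ℚ) (n g m : ℕ) : ℚ :=
  ∏ i ∈ Finset.range m, (q ^ n - q ^ (g + i))

/-- The number of frames of type `(a, m)` of an `n`-dimensional space adapted to a `g`-dimensional
subspace, see `adaptedFrames`. -/
def adaptedFrameCount (q : ℚ) (n g a m : ℕ) : ℚ :=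
  frameCount q g 0 a * frameCount q n g m

variable {q : ℚ} {n g a m : ℕ}

lemma frameCount_pos (hq : 1 < q) (h : g + m ≤ n) : 0 < frameCount q n g m := by
  refine Finset.prod_pos fun i hi => sub_pos.2 (pow_lt_pow_right₀ hq ?_)
  have := Finset.mem_range.1 hi
  omega

lemma adaptedFrameCount_pos (hq : 1 < q) (ha : a ≤ g) (h : g + m ≤ n) :
    0 < adaptedFrameCount q n g a m :=
  mul_pos (frameCount_pos hq (by omega)) (frameCount_pos hq h)

lemma frameCount_add_add (q : ℚ) (c n g m : ℕ) :
    frameCount q (c + n) (c + g) m = q ^ (c * m) * frameCount q n g m := by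
  calc frameCount q (c + n) (c + g) m
      = ∏ i ∈ Finset.range m, q ^ c * (q ^ n - q ^ (g + i)) :=
        Finset.prod_congr rfl fun i _ => by ring
    _ = q ^ (c * m) * frameCount q n g m := by
        rw [Finset.prod_mul_distrib, Finset.prod_const, Finset.card_range, pow_mul, frameCount]

lemma mul_frameCount_le_frameCount_succ (hq : 1 ≤ q) (ha : 1 ≤ a) (h : a ≤ n) :
    q * frameCount q n 0 a ≤ frameCount q (n + 1) 0 a := by
  have hpow : ∀ i ∈ Finset.range a, q ^ (0 + i) ≤ q ^ n := fun i hi =>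
    pow_le_pow_right₀ hq (by have := Finset.mem_range.1 hi; omega)
  calc q * frameCount q n 0 a
      ≤ q ^ a * frameCount q n 0 a :=
        mul_le_mul_of_nonneg_right (le_self_pow₀ hq (by omega))
          (Finset.prod_nonneg fun i hi => sub_nonneg.2 (hpow i hi))
    _ = ∏ i ∈ Finset.range a, q * (q ^ n - q ^ (0 + i)) := by
        rw [Finset.prod_mul_distrib, Finset.prod_const, Finset.card_range, frameCount]
    _ ≤ frameCount q (n + 1) 0 a := by
        refine Finset.prod_le_prod
          (fun i hi => mul_nonneg (by linarith) (sub_nonneg.2 (hpow i hi))) fun i _ => ?_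
        have hmono : q ^ (0 + i) ≤ q ^ (0 + i + 1) := pow_le_pow_right₀ hq (Nat.le_succ _)
        rw [mul_sub, ← pow_succ', ← pow_succ']
        linarith

lemma frameCount_le_mul_frameCount_succ (hq : 2 ≤ q) (h : g + m < n) :
    frameCount q n g m ≤ q * frameCount q n (g + 1) m := by
  have hq1 : 1 < q := by linarith
  have htele : frameCount q n g m * (q ^ n - q ^ (g + m)) =
      (q ^ n - q ^ g) * frameCount q n (g + 1) m := by
    rw [frameCount, frameCount, ← Finset.prod_range_succ, Finset.prod_range_succ', mul_comm]
    simp [add_comm, add_left_comm]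
  have hends : q ^ n - q ^ g ≤ q * (q ^ n - q ^ (g + m)) := by
    have h1 : q * q ^ (g + m) ≤ q ^ n := by
      rw [← pow_succ']
      exact pow_le_pow_right₀ hq1.le h
    have h2 : 2 * q ^ n ≤ q * q ^ n := by gcongr
    have h3 : 0 < q ^ g := by positivity
    linarith
  have hlast : 0 < q ^ n - q ^ (g + m) := sub_pos.2 (pow_lt_pow_right₀ hq1 h)
  have hpos := frameCount_pos hq1 (by omega : g + 1 + m ≤ n)
  refine le_of_mul_le_mul_right ?_ hlast
  calc frameCount q n g m * (q ^ n - q ^ (g + m))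
      ≤ q * (q ^ n - q ^ (g + m)) * frameCount q n (g + 1) m := by rw [htele]; gcongr
    _ = q * frameCount q n (g + 1) m * (q ^ n - q ^ (g + m)) := by ring

lemma adaptedFrameCount_le_succ (hq : 2 ≤ q) (ha : 1 ≤ a) (hag : a ≤ g) (h : g + m < n) :
    adaptedFrameCount q n g a m ≤ adaptedFrameCount q n (g + 1) a m := by
  have hq1 : 1 < q := by linarith
  have hpos := frameCount_pos hq1 (by omega : 0 + a ≤ g)
  have hpos' := frameCount_pos hq1 (by omega : g + 1 + m ≤ n)
  calc adaptedFrameCount q n g a m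
      ≤ frameCount q g 0 a * (q * frameCount q n (g + 1) m) := by
        rw [adaptedFrameCount]
        gcongr
        exact frameCount_le_mul_frameCount_succ hq h
    _ = q * frameCount q g 0 a * frameCount q n (g + 1) m := by ring
    _ ≤ adaptedFrameCount q n (g + 1) a m := by
        rw [adaptedFrameCount]
        gcongr
        exact mul_frameCount_le_frameCount_succ hq1.le ha hag

lemma adaptedFrameCount_self_le (hq : 2 ≤ q) (ha : 1 ≤ a) (hag : a ≤ g) (h : g + m ≤ n) :
    adaptedFrameCount q n a a m ≤ adaptedFrameCount q n g a m := by
  induction g, hag using Nat.le_induction with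
  | base => exact le_rfl
  | succ g hag ih => exact (ih (by omega)).trans (adaptedFrameCount_le_succ hq ha hag (by omega))

end FrameCount

section GaussianBinomial

lemma frameCount_eq_zero (q : ℚ) {n g m : ℕ} (hg : g ≤ n) (h : n < g + m) :
    frameCount q n g m = 0 :=
  Finset.prod_eq_zero (i := n - g) (Finset.mem_range.2 (by omega)) (by
    rw [Nat.add_sub_cancel' hg, sub_self])

lemma qBin_natCast (q a b : ℕ) : qBin q a b = frameCount q a 0 b / frameCount q b 0 b := by
  rcases le_or_gt b a with h | h
  · rw [qBin, if_pos (by omega), frameCount, frameCount, ← Finset.prod_div_distrib]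
    simp
  · rw [qBin, if_neg (by omega), frameCount_eq_zero _ a.zero_le (by omega), zero_div]

lemma frameCount_add_self (q : ℚ) (b c : ℕ) :
    frameCount q (b + c) 0 (b + c) =
      q ^ (b * c) * (frameCount q (b + c) 0 b * frameCount q c 0 c) := by
  have hsplit : frameCount q (b + c) 0 (b + c) =
      frameCount q (b + c) 0 b * frameCount q (b + c) (b + 0) c := by
    simp only [frameCount, Finset.prod_range_add, zero_add, add_zero]
  rw [hsplit, frameCount_add_add]
  ring

variable {q : ℕ}

lemma frameCount_natCast_self_ne_zero (hq : 2 ≤ q) (b : ℕ) : frameCount q b 0 b ≠ 0 :=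
  (frameCount_pos (by exact_mod_cast hq) (by omega)).ne'

lemma qBin_symm_add (hq : 2 ≤ q) (b c : ℕ) :
    qBin q ((b + c : ℕ) : ℤ) b = qBin q ((b + c : ℕ) : ℤ) c := by
  have hb := frameCount_add_self q b c
  have hc := frameCount_add_self q c b
  rw [add_comm c b, mul_comm c b, hb] at hc
  rw [qBin_natCast, qBin_natCast, div_eq_div_iff (frameCount_natCast_self_ne_zero hq b)
    (frameCount_natCast_self_ne_zero hq c)]
  exact mul_left_cancel₀ (by positivity) hc

lemma qBin_mul_qBin_mul_zpow_div_qBin (hq : 2 ≤ q) (n a c m : ℕ) :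
    qBin q n a * qBin q ((a + c + m : ℕ) : ℤ) ((a + c : ℕ) : ℤ) * (q : ℚ) ^ ((m : ℤ) * (n - a)) /
        qBin q ((c + m : ℕ) : ℤ) c =
      adaptedFrameCount q (n + (a + c + m)) n a m / adaptedFrameCount q (a + c + m) a a m := by
  have hq0 : (q : ℚ) ≠ 0 := by positivity
  have ha := frameCount_natCast_self_ne_zero hq a
  have hm := frameCount_natCast_self_ne_zero hq m
  have hcm : frameCount q (c + m) 0 m ≠ 0 :=
    (frameCount_pos (by exact_mod_cast hq) (by omega)).ne'
  have hzpow : (q : ℚ) ^ ((m : ℤ) * (n - a)) = (q : ℚ) ^ (n * m) / (q : ℚ) ^ (a * m) := by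
    rw [mul_sub, zpow_sub₀ hq0, mul_comm n, mul_comm a]
    norm_cast
  have hn := frameCount_add_add q n (a + c + m) 0 m
  have hk := frameCount_add_add q a (c + m) 0 m
  rw [add_zero] at hn hk
  rw [qBin_symm_add hq (a + c) m, qBin_symm_add hq c m, qBin_natCast, qBin_natCast, qBin_natCast,
    hzpow, adaptedFrameCount, adaptedFrameCount, hn, add_assoc a c m, hk]
  field_simp

end GaussianBinomial

section Frames

variable {K V : Type*} [Field K] [AddCommGroup V] [Module K V]

/-- The `m`-tuples in `U` that are linearly independent modulo `G`. -/
def framesMod (G U : Submodule K V) (m : ℕ) : Set (Fin m → V) :=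
  {t | (∀ i, t i ∈ U) ∧ LinearIndependent K (G.mkQ ∘ t)}

/-- Frames of type `(a, m)` of `U` adapted to `G`: a linearly independent `a`-tuple in `U ⊓ G`
together with an `m`-tuple in `U` that is linearly independent modulo `G`. They span
`(a + m)`-dimensional subspaces meeting `G` in dimension `a`, and counting them replaces
counting such subspaces. -/
def adaptedFrames (G : Submodule K V) (a m : ℕ) (U : Submodule K V) :
    Set ((Fin a → V) × (Fin m → V)) :=
  framesMod ⊥ (U ⊓ G) a ×ˢ framesMod G U m

lemma framesMod_mono {G U W : Submodule K V} {m : ℕ} (h : U ≤ W) :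
    framesMod G U m ⊆ framesMod G W m :=
  fun _ ht => ⟨fun i => h (ht.1 i), ht.2⟩

lemma adaptedFrames_mono {G : Submodule K V} {a m : ℕ} {U W : Submodule K V} (h : U ≤ W) :
    adaptedFrames G a m U ⊆ adaptedFrames G a m W :=
  Set.prod_mono (framesMod_mono (inf_le_inf_right G h)) (framesMod_mono h)

variable [FiniteDimensional K V]

lemma add_le_finrank_of_mem_adaptedFrames {G : Submodule K V} {a m : ℕ} {U : Submodule K V}
    {p : (Fin a → V) × (Fin m → V)} (hp : p ∈ adaptedFrames G a m U) : a + m ≤ finrank K U := by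
  obtain ⟨⟨hsU, hs⟩, htU, ht⟩ := hp
  let s : Fin a → G := fun i => ⟨p.1 i, (hsU i).2⟩
  have hs' : LinearIndependent K s :=
    LinearIndependent.of_comp G.subtype (LinearIndependent.of_comp (⊥ : Submodule K V).mkQ hs)
  have hspan : Submodule.span K (Set.range (Sum.elim (fun i => (s i : V)) p.2)) ≤ U := by
    rw [Submodule.span_le, Set.range_subset_iff]
    rintro (i | i)
    exacts [(hsU i).1, htU i]
  have h := Submodule.finrank_mono hspan
  rw [finrank_span_eq_card (hs'.sumElim_of_quotient p.2 ht)] at h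
  simpa using h

lemma disjoint_adaptedFrames {G : Submodule K V} {a m : ℕ} {U W : Submodule K V}
    (h : finrank K ↥(U ⊓ W) < a + m) :
    Disjoint (adaptedFrames G a m U) (adaptedFrames G a m W) := by
  rw [Set.disjoint_left]
  intro p hU hW
  have hp : p ∈ adaptedFrames G a m (U ⊓ W) :=
    ⟨⟨fun i => ⟨⟨(hU.1.1 i).1, (hW.1.1 i).1⟩, (hU.1.1 i).2⟩, hU.1.2⟩,
      fun i => ⟨hU.2.1 i, hW.2.1 i⟩, hU.2.2⟩
  exact h.not_ge (add_le_finrank_of_mem_adaptedFrames hp)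

variable [Fintype K]

lemma natCard_linearIndependent (m : ℕ) :
    (Nat.card {s : Fin m → V // LinearIndependent K s} : ℚ) =
      frameCount (Fintype.card K) (finrank K V) 0 m := by
  rcases le_or_gt m (finrank K V) with h | h
  · have : Finite V := Module.finite_of_finite K
    rw [card_linearIndependent h, frameCount, ← Fin.prod_univ_eq_prod_range fun i =>
      (Fintype.card K : ℚ) ^ finrank K V - (Fintype.card K : ℚ) ^ (0 + i), Nat.cast_prod]
    refine Finset.prod_congr rfl fun i _ => ?_
    rw [Nat.cast_sub (Nat.pow_le_pow_right Fintype.card_pos (by omega)), zero_add]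
    push_cast
    rfl
  · have : IsEmpty {s : Fin m → V // LinearIndependent K s} :=
      ⟨fun s => h.not_ge (by simpa using s.2.fintype_card_le_finrank)⟩
    rw [Nat.card_of_isEmpty, frameCount_eq_zero _ (Nat.zero_le _) (by omega), Nat.cast_zero]

lemma natCard_linearIndependent_comp {V' : Type*} [AddCommGroup V'] [Module K V']
    (f : V →ₗ[K] V') (m : ℕ) :
    (Nat.card {t : Fin m → V // LinearIndependent K (f ∘ t)} : ℚ) =
      frameCount (Fintype.card K) (finrank K V) (finrank K (LinearMap.ker f)) m := by
  have hker : Nat.card (LinearMap.ker f) = Fintype.card K ^ finrank K (LinearMap.ker f) := by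
    rw [Module.natCard_eq_pow_finrank (K := K), Nat.card_eq_fintype_card]
  have hcount := frameCount_add_add (Fintype.card K) (finrank K (LinearMap.ker f))
    (finrank K (LinearMap.range f)) 0 m
  rw [add_zero, add_comm (finrank K (LinearMap.ker f)), f.finrank_range_add_finrank_ker] at hcount
  rw [natCard_linearIndependent_comp_eq_mul, hker, hcount, Nat.cast_mul, natCard_linearIndependent,
    pow_mul]
  push_cast
  rfl

lemma ncard_framesMod (G U : Submodule K V) (m : ℕ) :
    ((framesMod G U m).ncard : ℚ) =
      frameCount (Fintype.card K) (finrank K U) (finrank K ↥(U ⊓ G)) m := by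
  have hker : finrank K (LinearMap.ker (G.mkQ.domRestrict U)) = finrank K ↥(U ⊓ G) := by
    rw [LinearMap.ker_domRestrict, Submodule.ker_mkQ,
      finrank_comap_of_injective U.injective_subtype, Submodule.range_subtype, inf_comm]
  rw [← hker, ← natCard_linearIndependent_comp]
  exact congrArg Nat.cast <| Nat.card_congr
    { toFun := fun t => ⟨fun i => ⟨t.1 i, t.2.1 i⟩, t.2.2⟩
      invFun := fun t => ⟨fun i => t.1 i, fun i => (t.1 i).2, t.2⟩ }

lemma ncard_adaptedFrames (G : Submodule K V) (a m : ℕ) (U : Submodule K V) :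
    ((adaptedFrames G a m U).ncard : ℚ) =
      adaptedFrameCount (Fintype.card K) (finrank K U) (finrank K ↥(U ⊓ G)) a m := by
  rw [adaptedFrames, Set.ncard_prod, Nat.cast_mul, ncard_framesMod, ncard_framesMod, inf_bot_eq,
    finrank_bot, adaptedFrameCount]

/-- Each member has at least `adaptedFrameCount q k a a m` adapted frames, and an adapted frame
determines the member containing it. -/
lemma ncard_mul_adaptedFrameCount_le (G : Submodule K V) {k a m : ℕ} (ha : 1 ≤ a)
    {C : Set (Submodule K V)} (hk : ∀ U ∈ C, finrank K U = k)
    (hle : ∀ U ∈ C, a ≤ finrank K ↥(U ⊓ G)) (hge : ∀ U ∈ C, finrank K ↥(U ⊓ G) + m ≤ k)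
    (hlt : ∀ U ∈ C, ∀ W ∈ C, U ≠ W → finrank K ↥(U ⊓ W) < a + m) :
    C.ncard * adaptedFrameCount (Fintype.card K) k a a m ≤
      adaptedFrameCount (Fintype.card K) (finrank K V) (finrank K G) a m := by
  have : Finite V := Module.finite_of_finite K
  have hq : (2 : ℚ) ≤ Fintype.card K := by exact_mod_cast Fintype.one_lt_card (α := K)
  have htop := ncard_adaptedFrames G a m ⊤
  rw [top_inf_eq, finrank_top] at htop
  rw [← htop]
  refine ncard_mul_le_ncard_of_pairwiseDisjoint (S := adaptedFrames G a m) (fun U hU => ?_)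
    (fun U _ => adaptedFrames_mono le_top)
    fun U hU W hW hne => disjoint_adaptedFrames (hlt U hU W hW hne)
  rw [ncard_adaptedFrames, hk U hU]
  exact adaptedFrameCount_self_le hq ha (hle U hU) (hge U hU)

end Frames

section ConstantDimensionCodes

variable {K : Type} [Field K]

lemma two_mul_finrank_inf_add_sDist {v : ℕ} (U W : Submodule K (Fin v → K)) :
    2 * finrank K ↥(U ⊓ W) + sDist U W = finrank K U + finrank K W := by
  have hsum := Submodule.finrank_sup_add_finrank_inf_eq U W
  have hle := Submodule.finrank_mono (inf_le_left.trans le_sup_left : U ⊓ W ≤ U ⊔ W)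
  rw [sDist]
  omega

lemma isCDC_iff {v k : ℕ} {d : ℤ} {C : Set (Submodule K (Fin v → K))} :
    IsCDC K v d k C ↔ (∀ U ∈ C, finrank K U = k) ∧
      ∀ U ∈ C, ∀ W ∈ C, U ≠ W → 2 * (finrank K ↥(U ⊓ W) : ℤ) + d ≤ 2 * k := by
  simp only [IsCDC, Nat.cast_inj]
  refine and_congr_right fun hk => forall₂_congr fun U hU => forall₂_congr fun W hW =>
    imp_congr_right fun _ => ?_
  have h := two_mul_finrank_inf_add_sDist U W
  rw [hk U hU, hk W hW] at h
  omega

lemma IsCDC.ncard_le_Amax [Finite K] {v : ℕ} {d k : ℤ} {C : Set (Submodule K (Fin v → K))}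
    (hC : IsCDC K v d k C) : C.ncard ≤ Amax K v d k := by
  refine le_csSup ⟨Nat.card (Submodule K (Fin v → K)), ?_⟩ ⟨C, hC, rfl⟩
  rintro _ ⟨D, -, rfl⟩
  exact Set.ncard_le_card D

/-- Shrinking each trace on the copy of `K ^ n` to dimension `a` yields a code there. -/
lemma ncard_le_Amax_of_le_finrank_comap [Finite K] {V : Type*} [AddCommGroup V] [Module K V]
    [FiniteDimensional K V] {n a : ℕ} {D : ℤ} (hD : 0 < D) {j : (Fin n → K) →ₗ[K] V}
    (hj : Function.Injective j) {C : Set (Submodule K V)}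
    (hmeet : ∀ U ∈ C, a ≤ finrank K (U.comap j))
    (hdist : ∀ U ∈ C, ∀ W ∈ C, U ≠ W → 2 * (finrank K ↥(U ⊓ W) : ℤ) + D ≤ 2 * a) :
    C.ncard ≤ Amax K n D a := by
  choose! E hE hrank using fun U hU => exists_submodule_le_finrank_eq (hmeet U hU)
  have hinf : ∀ U ∈ C, ∀ W ∈ C, finrank K ↥(E U ⊓ E W) ≤ finrank K ↥(U ⊓ W) :=
    fun U hU W hW => calc
      finrank K ↥(E U ⊓ E W) ≤ finrank K ((U ⊓ W).comap j) :=
        Submodule.finrank_mono (inf_le_inf (hE U hU) (hE W hW))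
      _ = finrank K ↥(U ⊓ W ⊓ LinearMap.range j) := finrank_comap_of_injective hj _
      _ ≤ finrank K ↥(U ⊓ W) := Submodule.finrank_mono inf_le_left
  have hinj : Set.InjOn E C := by
    intro U hU W hW hEUW
    by_contra hne
    have h := hinf U hU W hW
    rw [← hEUW, inf_idem, hrank U hU] at h
    have := hdist U hU W hW hne
    omega
  rw [← hinj.ncard_image]
  refine (isCDC_iff.2 ⟨?_, ?_⟩).ncard_le_Amax
  · rintro _ ⟨U, hU, rfl⟩
    exact hrank U hU
  · rintro _ ⟨U, hU, rfl⟩ _ ⟨W, hW, rfl⟩ hne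
    have h := hinf U hU W hW
    have := hdist U hU W hW (ne_of_apply_ne E hne)
    omega

lemma IsCDC.ncard_le_finrank_inf_le_Amax [Finite K] {v d k c : ℕ}
    {C : Set (Submodule K (Fin v → K))} (hC : IsCDC K v d k C) (G : Submodule K (Fin v → K))
    (hc : 2 * k < 2 * c + d) :
    {U ∈ C | c ≤ finrank K ↥(U ⊓ G)}.ncard ≤
      Amax K (finrank K G) (2 * c + d - 2 * k) c := by
  let e : (Fin (finrank K G) → K) ≃ₗ[K] G := (finBasis K G).equivFun.symm
  have hrange : LinearMap.range (G.subtype ∘ₗ e.toLinearMap) = G := by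
    rw [LinearMap.range_comp_of_range_eq_top _ e.range, Submodule.range_subtype]
  have hinj : Function.Injective (G.subtype ∘ₗ e.toLinearMap) :=
    G.injective_subtype.comp e.injective
  refine ncard_le_Amax_of_le_finrank_comap (by omega) hinj (fun U hU => ?_)
    fun U hU W hW hne => ?_
  · rw [finrank_comap_of_injective hinj, hrange]
    exact hU.2
  · have := (isCDC_iff.1 hC).2 U hU.1 W hW.1 hne
    omega

end ConstantDimensionCodes

section LiftedMRDCodes

lemma surjOn_mul_left_of_le_rank_sub {K r m n : Type*} [Field K] [Fintype K] [Fintype r]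
    [Fintype m] [Fintype n] {δ : ℕ} {R : Set (Matrix m n K)}
    (hcard : R.ncard = Fintype.card K ^ (Fintype.card r * Fintype.card n))
    (hrank : ∀ A ∈ R, ∀ A' ∈ R, A ≠ A' → δ ≤ (A - A').rank) {B : Matrix r m K}
    (hB : Fintype.card m < B.rank + δ) : Set.SurjOn (B * ·) R Set.univ := by
  have hinj : Set.InjOn (B * ·) R := by
    intro A hA A' hA' hAA'
    by_contra hne
    have hmul : B * (A - A') = 0 := by
      rw [Matrix.mul_sub]
      exact sub_eq_zero.2 hAA'
    have hle := Matrix.rank_add_rank_le_card_of_mul_eq_zero hmul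
    have := hrank A hA A' hA' hne
    omega
  refine (Set.eq_of_subset_of_ncard_le (Set.subset_univ _) ?_).ge
  rw [hinj.ncard_image, hcard, Set.ncard_univ, Module.natCard_eq_pow_finrank (K := K),
    Module.finrank_matrix, finrank_self, mul_one, Nat.card_eq_fintype_card]

variable {K : Type} [Field K] {k v : ℕ}

/-- The projection of `F_q^v` to its first `k` coordinates, with kernel `Γ`. -/
def headProj (K : Type) [Field K] (h : k ≤ v) : (Fin v → K) →ₗ[K] (Fin k → K) :=
  LinearMap.funLeft K K (Fin.castLE h)

/-- The projection of `F_q^v` to its last `v - k` coordinates. -/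
def tailProj (K : Type) [Field K] (k v : ℕ) : (Fin v → K) →ₗ[K] (Fin (v - k) → K) :=
  LinearMap.funLeft K K fun j => ⟨k + j, by omega⟩

lemma ker_headProj (h : k ≤ v) : LinearMap.ker (headProj K h) = Gamma K k v := by
  ext x
  refine ⟨fun hx j hj => congrFun hx ⟨j, hj⟩, fun hx => funext fun i => hx _ i.2⟩

lemma finrank_Gamma (h : k ≤ v) : finrank K (Gamma K k v) = v - k := by
  have hsurj : Function.Surjective (headProj K h) :=
    LinearMap.funLeft_surjective_of_injective K K _ (Fin.castLE_injective h)
  have hsum := LinearMap.finrank_range_add_finrank_ker (headProj K h)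
  rw [LinearMap.range_eq_top.2 hsurj, finrank_top, finrank_fin_fun, finrank_fin_fun,
    ker_headProj] at hsum
  omega

open Matrix in
lemma mem_span_liftRow (h : k ≤ v) (A : Matrix (Fin k) (Fin (v - k)) K) {x : Fin v → K}
    (hx : headProj K h x ᵥ* A = tailProj K k v x) :
    x ∈ Submodule.span K (Set.range (liftRow A)) := by
  have hsum : x = ∑ i, headProj K h x i • liftRow A i := by
    ext j
    rw [Finset.sum_apply]
    by_cases hj : (j : ℕ) < k
    · rw [Finset.sum_eq_single ⟨j, hj⟩]
      · simp [liftRow, hj, headProj, LinearMap.funLeft_apply]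
      · intro i _ hi
        have hij : (i : ℕ) ≠ j := fun h => hi (Fin.ext h)
        simp [liftRow, hj, hij]
      · simp
    · have hj' : (j : ℕ) - k < v - k := by omega
      have hkj : (⟨k + (j - k), by omega⟩ : Fin v) = j := Fin.ext (Nat.add_sub_cancel' (by omega))
      have htail := congrFun hx ⟨j - k, hj'⟩
      simp only [tailProj, LinearMap.funLeft_apply, hkj] at htail
      rw [← htail]
      simp [liftRow, hj, hj', vecMul, dotProduct]
  rw [hsum]
  exact Submodule.sum_mem _ fun i _ => Submodule.smul_mem _ _ (Submodule.subset_span ⟨i, rfl⟩)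

lemma IsLMRD.ncard_le {q d : ℕ} [Finite K] {M : Set (Submodule K (Fin v → K))}
    (hM : IsLMRD q K v d k M) : M.ncard ≤ q ^ ((v - k) * (k - d / 2 + 1)) := by
  obtain ⟨R, hR, -, rfl⟩ := hM
  have himage : {U | ∃ A ∈ R, U = Submodule.span K (Set.range (liftRow (v := v) A))} =
      (fun A => Submodule.span K (Set.range (liftRow (v := v) A))) '' R := by
    ext U
    simp [eq_comm]
  rw [← hR, himage]
  exact Set.ncard_image_le (Set.toFinite R)

/-- If the rows of `(B | T)` form a basis of `X`, then `X` lies in the lift of `A` as soon as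
`B * A = T`; such an `A` exists since left multiplication by `B` maps the MRD code onto all
matrices. -/
lemma IsLMRD.exists_le_of_disjoint_Gamma [Fintype K] {d : ℕ} {M : Set (Submodule K (Fin v → K))}
    (hM : IsLMRD (Fintype.card K) K v d k M) (h : k ≤ v) (hdk : d / 2 ≤ k)
    {X : Submodule K (Fin v → K)} (hX : finrank K X = k - d / 2 + 1)
    (hdisj : Disjoint X (Gamma K k v)) : ∃ W ∈ M, X ≤ W := by
  obtain ⟨R, hR, hrank, rfl⟩ := hM
  let b := finBasisOfFinrankEq K X hX
  let t : Fin (k - d / 2 + 1) → Fin v → K := X.subtype ∘ b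
  have ht : LinearIndependent K t := b.linearIndependent.map' _ X.ker_subtype
  have hspan : Submodule.span K (Set.range t) = X := by
    rw [Set.range_comp, ← Submodule.map_span, b.span_eq, Submodule.map_subtype_top]
  let B : Matrix (Fin (k - d / 2 + 1)) (Fin k) K := Matrix.of (headProj K h ∘ t)
  let T : Matrix (Fin (k - d / 2 + 1)) (Fin (v - k)) K := Matrix.of (tailProj K k v ∘ t)
  have hB : B.rank = k - d / 2 + 1 := by
    have hhead : LinearIndependent K (headProj K h ∘ t) := ht.map (by rwa [hspan, ker_headProj])
    have hrow : LinearIndependent K B.row := hhead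
    simpa using hrow.rank_matrix
  obtain ⟨A, hA, hAT⟩ := surjOn_mul_left_of_le_rank_sub (B := B)
    (by simpa [mul_comm] using hR) hrank (by rw [hB, Fintype.card_fin]; omega) (Set.mem_univ T)
  refine ⟨_, ⟨A, hA, rfl⟩, ?_⟩
  rw [← hspan, Submodule.span_le, Set.range_subset_iff]
  exact fun i => mem_span_liftRow h A (congrFun hAT i)

lemma IsLMRD.le_finrank_inf_Gamma [Fintype K] {d : ℕ} {C M : Set (Submodule K (Fin v → K))}
    (hM : IsLMRD (Fintype.card K) K v d k M) (hC : IsCDC K v d k C) (hMC : M ⊆ C) (h : k ≤ v)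
    (hd : Even d) (hdk : d / 2 ≤ k) {U : Submodule K (Fin v → K)} (hU : U ∈ C \ M) :
    d / 2 ≤ finrank K ↥(U ⊓ Gamma K k v) := by
  rw [isCDC_iff] at hC
  by_contra! hlt
  obtain ⟨X, hXU, hdisj, hX⟩ := exists_submodule_le_disjoint_finrank_eq
    (by rw [hC.1 U hU.1]; omega : k - d / 2 + 1 + finrank K ↥(U ⊓ Gamma K k v) ≤ finrank K U)
  obtain ⟨W, hW, hXW⟩ := hM.exists_le_of_disjoint_Gamma h hdk hX hdisj
  have hdist := hC.2 U hU.1 W (hMC hW) fun h => hU.2 (h ▸ hW)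
  have hle := Submodule.finrank_mono (le_inf hXU hXW)
  have := Nat.two_mul_div_two_of_even hd
  omega

lemma IsLMRD.ncard_sdiff_mul_adaptedFrameCount_le [Fintype K] {d : ℕ}
    {C M : Set (Submodule K (Fin v → K))} (hM : IsLMRD (Fintype.card K) K v d k M)
    (hC : IsCDC K v d k C) (hMC : M ⊆ C) (h : k ≤ v) (hd : Even d)
    (hd0 : 0 < d) (hdk : d ≤ k + 1) :
    {U ∈ C \ M | finrank K ↥(U ⊓ Gamma K k v) < d}.ncard *
        adaptedFrameCount (Fintype.card K) k (d / 2) (d / 2) (k + 1 - d) ≤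
      adaptedFrameCount (Fintype.card K) v (v - k) (d / 2) (k + 1 - d) := by
  have hhalf := Nat.two_mul_div_two_of_even hd
  have hC' := isCDC_iff.1 hC
  have hpacking := ncard_mul_adaptedFrameCount_le (Gamma K k v) (a := d / 2) (m := k + 1 - d)
    (C := {U ∈ C \ M | finrank K ↥(U ⊓ Gamma K k v) < d}) (by omega)
    (fun U hU => hC'.1 U hU.1.1)
    (fun U hU => hM.le_finrank_inf_Gamma hC hMC h hd (by omega) hU.1)
    (fun U hU => by have := hU.2; omega)
    (fun U hU W hW hne => by have := hC'.2 U hU.1.1 W hW.1.1 hne; omega)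
  rwa [finrank_fin_fun, finrank_Gamma h] at hpacking

lemma IsLMRD.ncard_sdiff_finrank_inf_Gamma_lt_le [Fintype K] {d : ℕ}
    {C M : Set (Submodule K (Fin v → K))} (hM : IsLMRD (Fintype.card K) K v d k M)
    (hC : IsCDC K v d k C) (hMC : M ⊆ C) (h : k ≤ v) (hd : Even d) (hd0 : 0 < d) (hdk : d ≤ k + 1) :
    ({U ∈ C \ M | finrank K ↥(U ⊓ Gamma K k v) < d}.ncard : ℚ) ≤
      qBin (Fintype.card K) ((v : ℤ) - k) ((d : ℤ) / 2) * qBin (Fintype.card K) k ((d : ℤ) - 1) *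
          (Fintype.card K : ℚ) ^ (((k : ℤ) - d + 1) * ((v : ℤ) - k - (d : ℤ) / 2)) /
        qBin (Fintype.card K) ((k : ℤ) - (d : ℤ) / 2) ((d : ℤ) / 2 - 1) := by
  have hq : 2 ≤ Fintype.card K := Fintype.one_lt_card
  have hhalf := Nat.two_mul_div_two_of_even hd
  have hratio := qBin_mul_qBin_mul_zpow_div_qBin hq (v - k) (d / 2) (d / 2 - 1) (k + 1 - d)
  rw [(by omega : d / 2 + (d / 2 - 1) + (k + 1 - d) = k), Nat.sub_add_cancel h] at hratio
  have hn : ((v - k : ℕ) : ℤ) = v - k := by omega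
  have ha : ((d / 2 : ℕ) : ℤ) = (d : ℤ) / 2 := by omega
  have hac : ((d / 2 + (d / 2 - 1) : ℕ) : ℤ) = d - 1 := by omega
  have hm : ((k + 1 - d : ℕ) : ℤ) = k - d + 1 := by omega
  have hcm : ((d / 2 - 1 + (k + 1 - d) : ℕ) : ℤ) = k - (d : ℤ) / 2 := by omega
  have hc : ((d / 2 - 1 : ℕ) : ℤ) = (d : ℤ) / 2 - 1 := by omega
  rw [hn, ha, hac, hm, hcm, hc] at hratio
  rw [hratio, le_div_iff₀ (adaptedFrameCount_pos (by exact_mod_cast hq) le_rfl (by omega))]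
  exact hM.ncard_sdiff_mul_adaptedFrameCount_le hC hMC h hd hd0 hdk

end LiftedMRDCodes

theorem stmt10_general (q : ℕ) (K : Type) [Field K] [Fintype K] (hq : Fintype.card K = q)
    (v d k : ℕ) (hd : Even d) (hkv : k ≤ v) (hdk : d ≤ k + 1) (hk3d : 2 * k < 3 * d)
    (C M : Set (Submodule K (Fin v → K)))
    (hC : IsCDC K v (d : ℤ) (k : ℤ) C) (hM : IsLMRD q K v d k M) (hMC : M ⊆ C) :
    (C.ncard : ℚ) ≤ (q : ℚ) ^ ((v - k) * (k - d / 2 + 1))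
      + (Amax K (v - k) (3 * (d : ℤ) - 2 * (k : ℤ)) (d : ℤ) : ℚ)
      + qBin q ((v : ℤ) - k) ((d : ℤ) / 2) * qBin q (k : ℤ) ((d : ℤ) - 1)
          * (q : ℚ) ^ (((k : ℤ) - d + 1) * ((v : ℤ) - k - (d : ℤ) / 2))
          / qBin q ((k : ℤ) - (d : ℤ) / 2) ((d : ℤ) / 2 - 1) := by
  subst hq
  have hcover : C ⊆ M ∪ {U ∈ C | d ≤ finrank K ↥(U ⊓ Gamma K k v)} ∪
      {U ∈ C \ M | finrank K ↥(U ⊓ Gamma K k v) < d} := by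
    intro U hU
    by_cases hUM : U ∈ M
    · exact .inl (.inl hUM)
    · exact (le_or_gt d _).imp (fun h => .inr ⟨hU, h⟩) fun h => ⟨⟨hU, hUM⟩, h⟩
  have hcard : C.ncard ≤ M.ncard + {U ∈ C | d ≤ finrank K ↥(U ⊓ Gamma K k v)}.ncard +
      {U ∈ C \ M | finrank K ↥(U ⊓ Gamma K k v) < d}.ncard :=
    (Set.ncard_le_ncard hcover).trans <|
      (Set.ncard_union_le _ _).trans (by gcongr; exact Set.ncard_union_le _ _)
  have hlarge := hC.ncard_le_finrank_inf_le_Amax (Gamma K k v) (by omega : 2 * k < 2 * d + d)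
  rw [finrank_Gamma hkv, (by ring : 2 * (d : ℤ) + d - 2 * k = 3 * d - 2 * k)] at hlarge
  have hsmall := hM.ncard_sdiff_finrank_inf_Gamma_lt_le hC hMC hkv hd (by omega) hdk
  refine (Nat.cast_le.2 hcard).trans ?_
  push_cast
  gcongr
  exact_mod_cast hM.ncard_le

/-- the LMRD bound for `d ≤ k < 3d/2`. -/
theorem stmt10 (q : ℕ) (K : Type) [Field K] [Fintype K] (hq : Fintype.card K = q)
    (v d k : ℕ) (hd : Even d) (hd2 : 2 ≤ d / 2) (hdk : d / 2 ≤ k) (hkv : 2 * k ≤ v)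
    (hdlek : d ≤ k) (hk3d : 2 * k < 3 * d)
    (C M : Set (Submodule K (Fin v → K)))
    (hC : IsCDC K v (d : ℤ) (k : ℤ) C) (hM : IsLMRD q K v d k M) (hMC : M ⊆ C) :
    (C.ncard : ℚ) ≤ (q : ℚ) ^ ((v - k) * (k - d / 2 + 1))
      + (Amax K (v - k) (3 * (d : ℤ) - 2 * (k : ℤ)) (d : ℤ) : ℚ)
      + qBin q ((v : ℤ) - k) ((d : ℤ) / 2) * qBin q (k : ℤ) ((d : ℤ) - 1)
          * (q : ℚ) ^ (((k : ℤ) - d + 1) * ((v : ℤ) - k - (d : ℤ) / 2))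
          / qBin q ((k : ℤ) - (d : ℤ) / 2) ((d : ℤ) / 2 - 1) := by
  exact stmt10_general q K hq v d k hd (by omega) (by omega) hk3d C M hC hM hMC
end

section
/- For every integer l ≥ 1 and every prime power q, there exists a (6+3l, q^{6+4l} + q^{2+l} + 1, 4+2l; 3+l)_q constant dimension code that contains a (6+3l, 4+2l; 3+l)_q lifted MRD code as a subset. -/
open Module

/-!
Let `n = k - 1` and split `F_q^v` as `E × B` with `dim E = n + 1`. The differences of distinct
members of a suitable Gabidulin code of maps `E → B` have kernels of dimension at most 1, so the
graphs of its members form an LMRD code. To these graphs one adds products `Uᵢ × Yᵢ`, where the `Uᵢ`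
are `q ^ n + 1` distinct points of `E` and the `Yᵢ` are `n`-dimensional subspaces of `B` meeting
pairwise in dimension at most 1. A product meets a graph in dimension at most `dim Uᵢ = 1`, because
a graph projects injectively to `E`, and two products meet in `0 × (Yᵢ ∩ Yⱼ)`.

The `Yᵢ` arise from the same construction one level down, in `F_q^n × F_q^(n - 1)`, which embeds in
`B`. Take a Gabidulin code of `q ^ n` endomorphisms of `F_q × F_q^(n - 1)` with pairwise invertible
differences. After dropping the first coordinate of the values, differences have kernels of
dimension 1, so the `q ^ n` graphs are suitable, and the product of a single point with all of
`F_q^(n - 1)` is the one further member.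
-/

/-- An indexed constant dimension code: all members have dimension `k` and distinct members meet in
dimension at most `r`, i.e. have subspace distance at least `2 * (k - r)`. Families are used in
place of sets so that the union of two codes is a `Sum.elim` whose size can be read off the index
type. -/
structure IsSubspaceCode (K : Type*) {V ι : Type*} [Field K] [AddCommGroup V] [Module K V]
    (k r : ℕ) (W : ι → Submodule K V) : Prop where
  finrank_eq : ∀ i, finrank K (W i) = k
  finrank_inf_le : ∀ ⦃i j⦄, i ≠ j → finrank K ↥(W i ⊓ W j) ≤ r

section Dimension

variable {K V V' : Type*} [Field K] [AddCommGroup V] [Module K V] [AddCommGroup V'] [Module K V']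

theorem finrank_map_of_injective {f : V →ₗ[K] V'} (hf : Function.Injective f)
    (S : Submodule K V) : finrank K (S.map f) = finrank K S :=
  (Submodule.equivMapOfInjective f hf S).finrank_eq.symm

theorem finrank_le_of_injOn_of_le_comap {f : V →ₗ[K] V'} {S : Submodule K V} {T : Submodule K V'}
    [FiniteDimensional K T] (hf : Set.InjOn f S) (h : S ≤ T.comap f) :
    finrank K S ≤ finrank K T :=
  LinearMap.finrank_le_finrank_of_injective (f := f.restrict h) fun x y hxy =>
    Subtype.ext (hf x.2 y.2 (congrArg Subtype.val hxy))

theorem finrank_submodule_prod [FiniteDimensional K V] [FiniteDimensional K V']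
    (S : Submodule K V) (T : Submodule K V') :
    finrank K (S.prod T) = finrank K S + finrank K T := by
  have hrange : S.prod T = (S.subtype.prodMap T.subtype).range := by
    rw [LinearMap.range_prodMap, Submodule.range_subtype, Submodule.range_subtype]
  rw [hrange, LinearMap.finrank_range_of_inj
    (Prod.map_injective.2 ⟨S.injective_subtype, T.injective_subtype⟩), finrank_prod]

theorem finrank_ker_snd_comp_le_one {f : V →ₗ[K] K × V'} (hf : Function.Injective f) :
    finrank K (LinearMap.ker (LinearMap.snd K K V' ∘ₗ f)) ≤ 1 := by
  have hsnd : finrank K (LinearMap.ker (LinearMap.snd K K V')) = 1 := by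
    rw [← LinearMap.range_inl, LinearMap.finrank_range_of_inj LinearMap.inl_injective, finrank_self]
  have := FiniteDimensional.of_finrank_pos (hsnd ▸ Nat.one_pos)
  exact (finrank_le_of_injOn_of_le_comap hf.injOn fun _ hx => hx).trans_eq hsnd

theorem injOn_fst_graph (f : V →ₗ[K] V') :
    Set.InjOn (LinearMap.fst K V V') (f.graph : Set (V × V')) := fun x hx y hy hxy =>
  Prod.ext hxy <| (f.mem_graph_iff x).1 hx |>.trans (congrArg f hxy) |>.trans
    ((f.mem_graph_iff y).1 hy).symm

theorem finrank_graph (f : V →ₗ[K] V') : finrank K f.graph = finrank K V := by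
  rw [LinearMap.graph_eq_range_prod]
  exact LinearMap.finrank_range_of_inj fun _ _ h => congrArg Prod.fst h

theorem finrank_graph_inf_graph_le [FiniteDimensional K V] (f g : V →ₗ[K] V') :
    finrank K ↥(f.graph ⊓ g.graph) ≤ finrank K (LinearMap.ker (f - g)) :=
  finrank_le_of_injOn_of_le_comap ((injOn_fst_graph f).mono inf_le_left) fun _ hx =>
    sub_eq_zero.2 (hx.1.symm.trans hx.2)

theorem finrank_graph_inf_prod_le [FiniteDimensional K V] (f : V →ₗ[K] V') (S : Submodule K V)
    (T : Submodule K V') : finrank K ↥(f.graph ⊓ S.prod T) ≤ finrank K S :=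
  finrank_le_of_injOn_of_le_comap ((injOn_fst_graph f).mono inf_le_left) fun _ hx => hx.2.1

end Dimension

section SubspaceCode

variable {K V V' ι : Type*} [Field K] [AddCommGroup V] [Module K V] [AddCommGroup V'] [Module K V']
  {k r : ℕ}

theorem IsSubspaceCode.map {W : ι → Submodule K V} (hW : IsSubspaceCode K k r W)
    {f : V →ₗ[K] V'} (hf : Function.Injective f) :
    IsSubspaceCode K k r fun i => (W i).map f where
  finrank_eq i := (finrank_map_of_injective hf _).trans (hW.finrank_eq i)
  finrank_inf_le i j hij := by
    rw [← Submodule.map_inf f hf, finrank_map_of_injective hf]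
    exact hW.finrank_inf_le hij

theorem IsSubspaceCode.comp {κ : Type*} {W : ι → Submodule K V} (hW : IsSubspaceCode K k r W)
    {e : κ → ι} (he : Function.Injective e) : IsSubspaceCode K k r (W ∘ e) where
  finrank_eq i := hW.finrank_eq (e i)
  finrank_inf_le _ _ hij := hW.finrank_inf_le (he.ne hij)

theorem IsSubspaceCode.injective {W : ι → Submodule K V} (hW : IsSubspaceCode K k r W)
    (hrk : r < k) : Function.Injective W := by
  intro i j hij
  by_contra hne
  have h := hW.finrank_inf_le hne
  rw [hij, inf_idem, hW.finrank_eq] at h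
  omega

theorem IsSubspaceCode.isCDC_range {K : Type} [Field K] {v : ℕ}
    {W : ι → Submodule K (Fin v → K)} (hW : IsSubspaceCode K k r W) :
    IsCDC K v ((2 * (k - r) : ℕ) : ℤ) k (Set.range W) := by
  constructor
  · rintro _ ⟨i, rfl⟩
    exact congrArg Nat.cast (hW.finrank_eq i)
  · rintro _ ⟨i, rfl⟩ _ ⟨j, rfl⟩ hne
    have hinf := hW.finrank_inf_le (ne_of_apply_ne W hne)
    have hsum := Submodule.finrank_sup_add_finrank_inf_eq (W i) (W j)
    rw [hW.finrank_eq, hW.finrank_eq] at hsum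
    unfold sDist
    omega

/-- The code extending the lifted rank metric code of the maps `f s`, i.e. the family of their
graphs, by the products `U i × Y i`. -/
def extendedLift {P : Type*} (f : P → V →ₗ[K] V') (U : ι → Submodule K V)
    (Y : ι → Submodule K V') : P ⊕ ι → Submodule K (V × V') :=
  Sum.elim (fun s => (f s).graph) fun i => (U i).prod (Y i)

theorem isSubspaceCode_extendedLift [FiniteDimensional K V] [FiniteDimensional K V'] {P : Type*}
    {f : P → V →ₗ[K] V'} {U : ι → Submodule K V} {Y : ι → Submodule K V'}
    (hV : finrank K V = k)
    (hf : Pairwise fun s t => finrank K (LinearMap.ker (f s - f t)) ≤ r)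
    (hU : ∀ i, finrank K (U i) = r) (hdisj : Pairwise fun i j => Disjoint (U i) (U j))
    (hY : ∀ i, r + finrank K (Y i) = k)
    (hYinf : Pairwise fun i j => finrank K ↥(Y i ⊓ Y j) ≤ r) :
    IsSubspaceCode K k r (extendedLift f U Y) where
  finrank_eq := by
    rintro (s | i)
    · exact (finrank_graph (f s)).trans hV
    · exact (finrank_submodule_prod _ _).trans (by rw [hU, hY])
  finrank_inf_le := by
    have hgraph_prod : ∀ s i, finrank K ↥((f s).graph ⊓ (U i).prod (Y i)) ≤ r := fun s i =>
      (finrank_graph_inf_prod_le _ _ _).trans (hU i).le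
    rintro (s | i) (t | j) hne
    · exact (finrank_graph_inf_graph_le _ _).trans (hf (ne_of_apply_ne Sum.inl hne))
    · exact hgraph_prod s j
    · exact inf_comm (f t).graph _ ▸ hgraph_prod t i
    · have hij : i ≠ j := ne_of_apply_ne Sum.inr hne
      calc finrank K ↥((U i).prod (Y i) ⊓ (U j).prod (Y j))
          = finrank K ↥(U i ⊓ U j) + finrank K ↥(Y i ⊓ Y j) := by
            rw [Submodule.prod_inf_prod, finrank_submodule_prod]
        _ = finrank K ↥(Y i ⊓ Y j) := by rw [(hdisj hij).eq_bot, finrank_bot, zero_add]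
        _ ≤ r := hYinf hij

end SubspaceCode

section Gabidulin

open Polynomial

variable (K : Type*) {L : Type*} [Field K] [Fintype K] [Field L] {r : ℕ}

/-- The linearized polynomial `∑ aᵢ X ^ (q ^ i)` over an extension of the field `K` with `q`
elements. -/
noncomputable def linearizedPolynomial (a : Fin r → L) : L[X] :=
  ∑ i, C (a i) * X ^ Fintype.card K ^ (i : ℕ)

theorem coeff_linearizedPolynomial (a : Fin r → L) (i : Fin r) :
    (linearizedPolynomial K a).coeff (Fintype.card K ^ (i : ℕ)) = a i := by
  have hinj : Function.Injective fun j : Fin r => Fintype.card K ^ (j : ℕ) :=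
    (Nat.pow_right_injective Fintype.one_lt_card).comp Fin.val_injective
  simp [linearizedPolynomial, coeff_X_pow, hinj.eq_iff]

theorem natDegree_linearizedPolynomial_le (a : Fin r → L) :
    (linearizedPolynomial K a).natDegree ≤ Fintype.card K ^ (r - 1) :=
  natDegree_sum_le_of_forall_le _ _ fun i _ => (natDegree_C_mul_X_pow_le _ _).trans
    (Nat.pow_le_pow_right Fintype.card_pos (by omega))

variable [Algebra K L]

/-- The `K`-linear maps `L → L` induced by linearized polynomials of `q`-degree less than `r`, as
a function of the coefficients; its image is the Gabidulin code. -/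
noncomputable def gabidulinMap (r : ℕ) :
    (Fin r → L) →ₗ[L] L →ₗ[K] L :=
  Fintype.linearCombination L fun i : Fin r =>
    (FiniteField.frobeniusAlgHom K L ^ (i : ℕ)).toLinearMap

theorem gabidulinMap_apply_apply (a : Fin r → L) (x : L) :
    gabidulinMap K r a x = (linearizedPolynomial K a).eval x := by
  simp [gabidulinMap, linearizedPolynomial, Fintype.linearCombination_apply, eval_finsetSum,
    AlgHom.coe_pow, FiniteField.coe_frobeniusAlgHom, pow_iterate]

theorem finrank_ker_gabidulinMap_lt [FiniteDimensional K L] {a : Fin r → L} (ha : a ≠ 0) :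
    finrank K (LinearMap.ker (gabidulinMap K r a)) < r := by
  obtain ⟨i, hi⟩ := Function.ne_iff.1 ha
  have hp : linearizedPolynomial K a ≠ 0 := fun h =>
    hi (by rw [← coeff_linearizedPolynomial K a i, h, coeff_zero, Pi.zero_apply])
  have hroots : (LinearMap.ker (gabidulinMap K r a) : Set L) ⊆
      (linearizedPolynomial K a).rootSet L := fun x hx => by
    simpa [mem_rootSet, hp, gabidulinMap_apply_apply] using hx
  have hcard : Fintype.card K ^ finrank K (LinearMap.ker (gabidulinMap K r a)) ≤
      Fintype.card K ^ (r - 1) :=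
    calc _ = (LinearMap.ker (gabidulinMap K r a) : Set L).ncard := by
          rw [← Nat.card_coe_set_eq, Fintype.card_eq_nat_card]
          exact (natCard_eq_pow_finrank (K := K)).symm
      _ ≤ ((linearizedPolynomial K a).rootSet L).ncard :=
          Set.ncard_le_ncard hroots (rootSet_finite _ L)
      _ ≤ (linearizedPolynomial K a).natDegree :=
          ncard_rootSet_le _ L
      _ ≤ _ := natDegree_linearizedPolynomial_le K a
  have := (Nat.pow_le_pow_iff_right Fintype.one_lt_card).1 hcard
  have := i.pos
  omega

end Gabidulin

theorem exists_field_extension_finrank_eq (K : Type*) [Field K] [Finite K] {n : ℕ} (hn : n ≠ 0) :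
    ∃ (L : Type) (_ : Field L) (_ : Algebra K L), FiniteDimensional K L ∧ finrank K L = n := by
  obtain ⟨p, hp⟩ := CharP.exists K
  have : Fact p.Prime := ⟨CharP.char_is_prime K p⟩
  have : NeZero n := ⟨hn⟩
  exact ⟨FiniteField.Extension K p n, inferInstance, inferInstance, inferInstance,
    FiniteField.finrank_extension K p n⟩

section Existence

open scoped LinearAlgebra.Projectivization

variable (K : Type*) [Field K] [Finite K]

theorem exists_submodule_finrank_ker_lt (E B : Type*) [AddCommGroup E] [Module K E]
    [AddCommGroup B] [Module K B] [FiniteDimensional K E] [FiniteDimensional K B] [Nontrivial B]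
    (hEB : finrank K E ≤ finrank K B) {r : ℕ} (hr : r ≤ finrank K E) :
    ∃ C : Submodule K (E →ₗ[K] B), finrank K C = r * finrank K B ∧
      ∀ f ∈ C, f ≠ 0 → finrank K (LinearMap.ker f) < r := by
  have := Fintype.ofFinite K
  obtain ⟨L, _, _, _, hL⟩ := exists_field_extension_finrank_eq K (finrank_pos (R := K) (M := B)).ne'
  obtain ⟨j, hj⟩ := finrank_le_iff_exists_linearMap.1 (hEB.trans_eq hL.symm)
  let e : L ≃ₗ[K] B := LinearEquiv.ofFinrankEq L B hL
  let G : (Fin r → L) →ₗ[K] E →ₗ[K] B := e.congrRight.toLinearMap ∘ₗ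
    LinearMap.lcomp K L j ∘ₗ (gabidulinMap K (L := L) r).restrictScalars K
  have hcomap : ∀ a, LinearMap.ker (G a) ≤ (LinearMap.ker (gabidulinMap K r a)).comap j :=
    fun a x hx => e.map_eq_zero_iff.1 hx
  have hker : ∀ a ≠ 0, finrank K (LinearMap.ker (G a)) < r := fun a ha =>
    (finrank_le_of_injOn_of_le_comap hj.injOn (hcomap a)).trans_lt
      (finrank_ker_gabidulinMap_lt K ha)
  have hG : Function.Injective G := by
    refine (injective_iff_map_eq_zero G).2 fun a ha => ?_
    by_contra hne
    have h := hker a hne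
    rw [ha, LinearMap.ker_zero, finrank_top] at h
    omega
  refine ⟨LinearMap.range G, ?_, ?_⟩
  · rw [LinearMap.finrank_range_of_inj hG, finrank_pi_fintype, Fin.sum_const, hL, smul_eq_mul]
  · rintro _ ⟨a, rfl⟩ ha
    exact hker a fun h => ha (by rw [h, map_zero])

theorem exists_isSubspaceCode_card_pow_add_one (B : Type*) [AddCommGroup B] [Module K B]
    [FiniteDimensional K B] {k : ℕ} (hk : k ≠ 0) (hB : 2 * k ≤ finrank K B + 1) :
    ∃ Y : Fin (Nat.card K ^ k + 1) → Submodule K B, IsSubspaceCode K k 1 Y := by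
  obtain ⟨n, rfl⟩ := Nat.exists_eq_succ_of_ne_zero hk
  let F := Fin n → K
  have hF : finrank K F = n := finrank_fin_fun K
  have hV : finrank K (K × F) = n + 1 := by rw [finrank_prod, finrank_self, hF, add_comm]
  obtain ⟨C, hC, hker⟩ := exists_submodule_finrank_ker_lt K (K × F) (K × F) le_rfl
    (r := 1) (by omega)
  have hproj : Pairwise fun f g : C => finrank K (LinearMap.ker
      (LinearMap.snd K K F ∘ₗ f.1 - LinearMap.snd K K F ∘ₗ g.1)) ≤ 1 := by
    intro f g hfg
    have hinj : Function.Injective (f.1 - g.1) := by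
      rw [← LinearMap.ker_eq_bot, ← Submodule.finrank_eq_zero (R := K), ← Nat.lt_one_iff]
      exact hker _ (C.sub_mem f.2 g.2) (sub_ne_zero.2 (Subtype.coe_injective.ne hfg))
    rw [← LinearMap.comp_sub]
    exact finrank_ker_snd_comp_le_one hinj
  have hcode : IsSubspaceCode K (n + 1) 1 (extendedLift (fun f : C => LinearMap.snd K K F ∘ₗ f.1)
      (fun _ : Unit => K ∙ ((1, 0) : K × F)) fun _ => ⊤) :=
    isSubspaceCode_extendedLift hV hproj (fun _ => finrank_span_singleton (by simp))
      Subsingleton.pairwise (fun _ => by rw [finrank_top, hF, add_comm]) Subsingleton.pairwise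
  obtain ⟨j, hj⟩ := finrank_le_iff_exists_linearMap (R := K) (M := (K × F) × F) (M' := B) |>.1
    (by rw [finrank_prod, hV, hF]; omega)
  have : Finite C := Module.finite_of_finite K
  have hcard : Nat.card (C ⊕ Unit) = Nat.card K ^ (n + 1) + 1 := by
    rw [Nat.card_sum, natCard_eq_pow_finrank (K := K), hC, hV, one_mul,
      Nat.card_unique (α := Unit)]
  exact ⟨_, (hcode.map hj).comp (Finite.equivFinOfCardEq hcard).symm.injective⟩

theorem exists_pairwise_disjoint_submodule_finrank_one (E : Type*) [AddCommGroup E] [Module K E]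
    {n : ℕ} (hn : 1 ≤ n) (hE : finrank K E = n + 1) :
    ∃ U : Fin (Nat.card K ^ n + 1) → Submodule K E,
      (∀ i, finrank K (U i) = 1) ∧ Pairwise fun i j => Disjoint (U i) (U j) := by
  have := Module.finite_of_finrank_eq_succ hE
  have : Finite E := Module.finite_of_finite K
  have hcard : Nat.card K ^ n + 1 ≤ Nat.card (ℙ K E) := by
    obtain ⟨m, rfl⟩ := Nat.exists_eq_add_of_le' hn
    rw [Projectivization.card_of_finrank K E hE, Finset.sum_range_succ, Finset.sum_range_succ',
      pow_zero]
    omega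
  let p : Fin (Nat.card K ^ n + 1) → ℙ K E :=
    (Finite.equivFin (ℙ K E)).symm ∘ Fin.castLE hcard
  have hp : Function.Injective p :=
    (Finite.equivFin _).symm.injective.comp (Fin.castLE_injective hcard)
  have hatom : ∀ i, IsAtom (p i).submodule := fun i =>
    Submodule.isAtom_iff_finrank_eq_one.2 (p i).finrank_submodule
  exact ⟨fun i => (p i).submodule, fun i => (p i).finrank_submodule, fun i j hij =>
    (hatom i).disjoint_of_ne (hatom j) (Projectivization.submodule_injective.ne (hp.ne hij))⟩

end Existence

section Lifting

variable {K : Type} [Field K] {k v : ℕ}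

/-- The identification of `F_q^k × F_q^(v - k)` with `F_q^v` by concatenation. It carries the graph
of `x ↦ x A` to the row space of `(I_k | A)`. -/
def concatEquiv (K : Type) [Field K] (hkv : k ≤ v) :
    ((Fin k → K) × (Fin (v - k) → K)) ≃ₗ[K] (Fin v → K) :=
  (LinearEquiv.sumArrowLequivProdArrow (Fin k) (Fin (v - k)) K K).symm ≪≫ₗ
    LinearEquiv.funCongrLeft K K
      ((finCongr (Nat.add_sub_cancel' hkv).symm).trans finSumFinEquiv.symm)

theorem liftRow_eq_concatEquiv (hkv : k ≤ v) (A : Matrix (Fin k) (Fin (v - k)) K) (i : Fin k) :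
    liftRow A i = concatEquiv K hkv (Pi.single i 1, A i) := by
  let e := finSumFinEquiv.trans (finCongr (Nat.add_sub_cancel' hkv))
  ext j
  obtain ⟨s | s, rfl⟩ := e.surjective j
  · simp [e, concatEquiv, liftRow, Pi.single_apply, Fin.ext_iff, eq_comm]
  · simp [e, concatEquiv, liftRow]

theorem span_range_liftRow (hkv : k ≤ v) (A : Matrix (Fin k) (Fin (v - k)) K) :
    Submodule.span K (Set.range (liftRow A)) =
      A.vecMulLinear.graph.map (concatEquiv K hkv).toLinearMap := by
  let g := (concatEquiv K hkv).toLinearMap ∘ₗ LinearMap.id.prod A.vecMulLinear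
  have hrow : liftRow A = g ∘ Pi.basisFun K (Fin k) := by
    funext i
    simp [g, liftRow_eq_concatEquiv hkv, Matrix.row]
  rw [hrow, Set.range_comp, ← Submodule.map_span, Basis.span_eq, Submodule.map_comp,
    Submodule.map_top, LinearMap.graph_eq_range_prod]

theorem rank_add_finrank_ker_vecMulLinear {F m n : Type*} [Field F]
    [Fintype m] [Fintype n] (A : Matrix m n F) :
    A.rank + finrank F (LinearMap.ker A.vecMulLinear) = Fintype.card m := by
  rw [← A.rank_transpose, Matrix.rank, Matrix.mulVecLin_transpose,
    LinearMap.finrank_range_add_finrank_ker, finrank_fintype_fun_eq_card]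

theorem isLMRD_range_map_graph {d : ℕ} (hkv : k ≤ v) (hd : d / 2 ≤ k)
    {C : Submodule K ((Fin k → K) →ₗ[K] (Fin (v - k) → K))}
    (hC : finrank K C = (v - k) * (k - d / 2 + 1))
    (hker : ∀ f ∈ C, f ≠ 0 → finrank K (LinearMap.ker f) ≤ k - d / 2) :
    IsLMRD (Nat.card K) K v d k
      (Set.range fun f : C => f.1.graph.map (concatEquiv K hkv).toLinearMap) := by
  let e : Matrix (Fin k) (Fin (v - k)) K ≃ ((Fin k → K) →ₗ[K] (Fin (v - k) → K)) :=
    Matrix.toLinearMapRight'.toEquiv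
  refine ⟨e ⁻¹' C, ?_, fun A hA B hB hAB => ?_, ?_⟩
  · rw [Set.ncard_preimage_of_injective_subset_range e.injective (by simp [e.range_eq_univ]),
      ← Nat.card_coe_set_eq, ← hC]
    exact natCard_eq_pow_finrank (V := C)
  · have hsub : (A - B).vecMulLinear = e A - e B := map_sub Matrix.toLinearMapRight' A B
    have hle := hker _ (C.sub_mem hA hB) (sub_ne_zero.2 (e.injective.ne hAB))
    have hrank := rank_add_finrank_ker_vecMulLinear (A - B)
    rw [hsub, Fintype.card_fin] at hrank
    omega
  · ext U
    constructor
    · rintro ⟨f, rfl⟩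
      obtain ⟨A, hA⟩ := e.surjective f.1
      refine ⟨A, show e A ∈ C from hA ▸ f.2, ?_⟩
      rw [span_range_liftRow hkv]
      exact congrArg (fun g : _ →ₗ[K] _ => g.graph.map (concatEquiv K hkv).toLinearMap) hA.symm
    · rintro ⟨A, hA, rfl⟩
      exact ⟨⟨e A, hA⟩, (span_range_liftRow hkv A).symm⟩

end Lifting

theorem stmt19_general (K : Type) [Field K] [Finite K] {n v : ℕ} (hn : 2 ≤ n) (hv : 3 * n ≤ v) :
    ∃ C M : Set (Submodule K (Fin v → K)),
      IsCDC K v ((2 * n : ℕ) : ℤ) ((n + 1 : ℕ) : ℤ) C ∧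
      IsLMRD (Nat.card K) K v (2 * n) (n + 1) M ∧ M ⊆ C ∧
      C.ncard = Nat.card K ^ (2 * (v - (n + 1))) + Nat.card K ^ n + 1 := by
  let E := Fin (n + 1) → K
  let B := Fin (v - (n + 1)) → K
  have hE : finrank K E = n + 1 := finrank_fin_fun K
  have hB : finrank K B = v - (n + 1) := finrank_fin_fun K
  have hd : n + 1 - 2 * n / 2 = 1 := by omega
  have : Nontrivial B := nontrivial_of_finrank_pos (R := K) (by omega)
  obtain ⟨C, hC, hker⟩ := exists_submodule_finrank_ker_lt K E B (by omega) (r := 2) (by omega)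
  obtain ⟨U, hU, hdisj⟩ := exists_pairwise_disjoint_submodule_finrank_one K E (by omega) hE
  obtain ⟨Y, hY⟩ := exists_isSubspaceCode_card_pow_add_one K B (k := n) (by omega) (by omega)
  have hkerC : ∀ f ∈ C, f ≠ 0 → finrank K (LinearMap.ker f) ≤ 1 := fun f hf hne =>
    Nat.le_of_lt_succ (hker f hf hne)
  have hcode : IsSubspaceCode K (n + 1) 1 (extendedLift (fun f : C => f.1) U Y) :=
    isSubspaceCode_extendedLift hE
      (fun f g hfg => hkerC _ (C.sub_mem f.2 g.2) (sub_ne_zero.2 (Subtype.coe_injective.ne hfg)))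
      hU hdisj (fun i => by rw [hY.finrank_eq, add_comm]) hY.finrank_inf_le
  have hkv : n + 1 ≤ v := by omega
  have hW := hcode.map (f := (concatEquiv K hkv).toLinearMap) (concatEquiv K hkv).injective
  have : Finite C := Module.finite_of_finite K
  refine ⟨_, _, hW.isCDC_range, isLMRD_range_map_graph hkv (by omega) (C := C) ?_ ?_, ?_, ?_⟩
  · rw [hC, hB, hd, mul_comm]
  · rwa [hd]
  · exact Set.range_subset_iff.2 fun f => ⟨Sum.inl f, rfl⟩
  · rw [Set.ncard_range_of_injective (hW.injective (by omega)), Nat.card_sum, Nat.card_fin,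
      natCard_eq_pow_finrank (K := K), hC, hB, add_assoc]

/-- for every `l ≥ 1` there is a
`(6+3l, q^(6+4l) + q^(2+l) + 1, 4+2l; 3+l)_q` CDC containing an LMRD. -/
theorem stmt19 (q : ℕ) (K : Type) [Field K] [Fintype K] (hq : Fintype.card K = q)
    (l : ℕ) (hl : 1 ≤ l) :
    ∃ C M : Set (Submodule K (Fin (6 + 3 * l) → K)),
      IsCDC K (6 + 3 * l) ((4 + 2 * l : ℕ) : ℤ) ((3 + l : ℕ) : ℤ) C ∧
      IsLMRD q K (6 + 3 * l) (4 + 2 * l) (3 + l) M ∧ M ⊆ C ∧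
      C.ncard = q ^ (6 + 4 * l) + q ^ (2 + l) + 1 := by
  subst hq
  rw [Fintype.card_eq_nat_card]
  obtain ⟨C, M, hC, hM, hMC, hcard⟩ :=
    stmt19_general K (n := 2 + l) (v := 6 + 3 * l) (by omega) (by omega)
  rw [show 2 * (2 + l) = 4 + 2 * l by ring, show 2 + l + 1 = 3 + l by ring] at hC hM
  exact ⟨C, M, hC, hM, hMC, by rw [hcard, show 2 * (6 + 3 * l - (2 + l + 1)) = 6 + 4 * l by omega]⟩
end
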